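/- Let (Ω, 𝒜, ℙ) be a probability space and let P be a probability measure on ℝ such that x ↦ e^{tx} is P-integrable for every t ∈ ℝ; write L(t) = ∫ e^{tx} dP(x). For each n ∈ ℕ let Q_n be a random probability measure on ℝ, i.e. a map Q_n : Ω → (probability measures on ℝ) such that ω ↦ ∫ g dQ_n(ω) is measurable for every bounded measurable g : ℝ → ℝ. Assume that for every t ∈ ℝ, x ↦ e^{tx} is Q_n(ω)-integrable for every ω, that ω ↦ ∫ e^{tx} dQ_n(ω)(x) is measurable, that ∫ e^{tx} dQ_n(ω)(x) converges in probability to L(t) as n → ∞, and additionally that P has no atoms, i.e. P({x}) = 0 for every x ∈ ℝ. Then sup_{s ∈ ℝ} |Q_n(ω)((−∞, s]) − P((−∞, s])| converges in probability to 0 as n → ∞. -/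

import Mathlib

/-!
A bound `∫ exp (r * |x|) ≤ C` cuts out a compact set of probability measures, and for `|t| ≤ r / 2`
the moment generating function at `t` is weakly continuous on it, because
`exp (t * x) ^ 2 ≤ exp (r * |x|)` makes the error of truncating `exp (t * x)` uniformly small. Since
the moment generating function near `0` determines the measure (by analytic continuation, it
determines the characteristic function), its pointwise convergence near `0`, along any filter,
forces weak convergence: there is only one possible cluster point in the compact set. Convergence in
probability to a constant is convergence along a filter on `ι × Ω`, so the same holds for random
measures. Weak convergence to an atomless law gives pointwise convergence of the distribution
functions, which is uniform by monotonicity and continuity of the limit (Pólya).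
-/

open MeasureTheory Filter

section

open Set ProbabilityTheory Topology BoundedContinuousFunction
open scoped ENNReal NNReal

section PolyaTheorem

variable {ι α : Type*} {l : Filter ι}

lemma eventually_forall_mem_abs_sub_lt_of_bracket {F : ι → α → ℝ} {f : α → ℝ} {s : Set α}
    {u v : ι → ℝ} {a b ε : ℝ} (hu : Tendsto u l (𝓝 a)) (hv : Tendsto v l (𝓝 b))
    (hF : ∀ i, ∀ x ∈ s, F i x ∈ Icc (u i) (v i)) (hf : ∀ x ∈ s, f x ∈ Icc a b)
    (hab : b - a < ε) : ∀ᶠ i in l, ∀ x ∈ s, |F i x - f x| < ε := by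
  have hu' : ∀ᶠ i in l, b - ε < u i := hu.eventually_const_lt (by linarith)
  have hv' : ∀ᶠ i in l, v i < a + ε := hv.eventually_lt_const (by linarith)
  filter_upwards [hu', hv'] with i hui hvi x hx
  obtain ⟨huF, hFv⟩ := hF i x hx
  obtain ⟨haf, hfb⟩ := hf x hx
  exact abs_lt.2 ⟨by linarith, by linarith⟩

variable [LinearOrder α] [TopologicalSpace α] [OrderTopology α] {F : ι → α → ℝ} {f : α → ℝ}

lemma tendstoLocallyUniformly_of_monotone [l.NeBot] (hF : ∀ i, Monotone (F i)) (hf : Continuous f)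
    (hlim : ∀ x, Tendsto (F · x) l (𝓝 (f x))) : TendstoLocallyUniformly F f l := by
  have hfmono : Monotone f := fun x y hxy ↦
    le_of_tendsto_of_tendsto' (hlim x) (hlim y) fun i ↦ hF i hxy
  rw [Metric.tendstoLocallyUniformly_iff]
  intro ε hε x
  obtain ⟨b, c, hx, hbc_nhds, hbc⟩ := exists_Icc_mem_subset_of_mem_nhds
    (hf.continuousAt.preimage_mem_nhds (Metric.ball_mem_nhds (f x) (half_pos hε)))
  have hosc : f c - f b < ε := by
    have hb : dist (f b) (f x) < ε / 2 := hbc ⟨le_rfl, hx.1.trans hx.2⟩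
    have hc : dist (f c) (f x) < ε / 2 := hbc ⟨hx.1.trans hx.2, le_rfl⟩
    rw [Real.dist_eq, abs_lt] at hb hc
    linarith
  refine ⟨Icc b c, hbc_nhds, ?_⟩
  simpa only [dist_comm (f _), Real.dist_eq] using
    eventually_forall_mem_abs_sub_lt_of_bracket (hlim b) (hlim c)
      (fun i y hy ↦ ⟨hF i hy.1, hF i hy.2⟩) (fun y hy ↦ ⟨hfmono hy.1, hfmono hy.2⟩) hosc

theorem tendstoUniformly_of_monotone [CompactIccSpace α] [Nonempty α] {A B : ℝ}
    (hF : ∀ i, Monotone (F i)) (hmem : ∀ i x, F i x ∈ Icc A B) (hf : Continuous f)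
    (hbot : Tendsto f atBot (𝓝 A)) (htop : Tendsto f atTop (𝓝 B))
    (hlim : ∀ x, Tendsto (F · x) l (𝓝 (f x))) : TendstoUniformly F f l := by
  obtain rfl | _ := l.eq_or_neBot
  · simp [TendstoUniformly]
  have hfmono : Monotone f := fun x y hxy ↦
    le_of_tendsto_of_tendsto' (hlim x) (hlim y) fun i ↦ hF i hxy
  have hfmem (x : α) : f x ∈ Icc A B :=
    isClosed_Icc.mem_of_tendsto (hlim x) (.of_forall fun i ↦ hmem i x)
  rw [Metric.tendstoUniformly_iff]
  intro ε hε
  obtain ⟨a, ha⟩ : ∃ a, f a < A + ε := (hbot.eventually_lt_const (by linarith)).exists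
  obtain ⟨b, hb⟩ : ∃ b, B - ε < f b := (htop.eventually_const_lt (by linarith)).exists
  have hleft : ∀ᶠ i in l, ∀ x ∈ Iic a, |F i x - f x| < ε :=
    eventually_forall_mem_abs_sub_lt_of_bracket tendsto_const_nhds (hlim a)
      (fun i x hx ↦ ⟨(hmem i x).1, hF i hx⟩) (fun x hx ↦ ⟨(hfmem x).1, hfmono hx⟩) (by linarith)
  have hright : ∀ᶠ i in l, ∀ x ∈ Ici b, |F i x - f x| < ε :=
    eventually_forall_mem_abs_sub_lt_of_bracket (hlim b) tendsto_const_nhds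
      (fun i x hx ↦ ⟨hF i hx, (hmem i x).2⟩) (fun x hx ↦ ⟨hfmono hx, (hfmem x).2⟩) (by linarith)
  have hmiddle : ∀ᶠ i in l, ∀ x ∈ Icc a b, dist (f x) (F i x) < ε :=
    Metric.tendstoUniformlyOn_iff.1
      ((tendstoLocallyUniformlyOn_iff_tendstoUniformlyOn_of_compact isCompact_Icc).1
        (tendstoLocallyUniformly_of_monotone hF hf hlim).tendstoLocallyUniformlyOn) ε hε
  filter_upwards [hleft, hmiddle, hright] with i hil him hir x
  rcases le_total x a with hxa | hax
  · rw [dist_comm]; exact hil x hxa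
  rcases le_total x b with hxb | hbx
  · exact him x ⟨hax, hxb⟩
  · rw [dist_comm]; exact hir x hbx

end PolyaTheorem

lemma tendsto_iSup_dist_of_tendstoUniformly {ι α E : Type*} [PseudoMetricSpace E] {l : Filter ι}
    {F : ι → α → E} {f : α → E} (h : TendstoUniformly F f l) :
    Tendsto (fun i ↦ ⨆ x, dist (F i x) (f x)) l (𝓝 0) := by
  refine Metric.nhds_basis_closedBall.tendsto_right_iff.2 fun ε hε ↦ ?_
  filter_upwards [Metric.tendstoUniformly_iff.1 h ε hε] with i hi
  rw [mem_closedBall_zero_iff, Real.norm_of_nonneg (Real.iSup_nonneg fun _ ↦ dist_nonneg)]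
  exact Real.iSup_le (fun x ↦ (dist_comm _ _).trans_le (hi x).le) hε.le

lemma continuous_cdf (μ : Measure ℝ) [IsProbabilityMeasure μ] [NullSingletonClass μ] :
    Continuous (cdf μ) := by
  refine continuous_iff_continuousAt.2 fun x ↦ ?_
  rw [(monotone_cdf μ).continuousAt_iff_leftLim_eq_rightLim, StieltjesFunction.rightLim_eq]
  have hjump : ENNReal.ofReal (cdf μ x - Function.leftLim (cdf μ) x) = 0 := by
    rw [← StieltjesFunction.measure_singleton, measure_cdf, measure_singleton]
  exact ((monotone_cdf μ).leftLim_le le_rfl).antisymm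
    (sub_nonpos.1 (ENNReal.ofReal_eq_zero.1 hjump))

theorem tendstoUniformly_cdf {ι : Type*} {l : Filter ι} {μ : ι → ProbabilityMeasure ℝ}
    {P : ProbabilityMeasure ℝ} [NullSingletonClass (P : Measure ℝ)] (h : Tendsto μ l (𝓝 P)) :
    TendstoUniformly (fun i ↦ cdf (μ i : Measure ℝ)) (cdf (P : Measure ℝ)) l := by
  refine tendstoUniformly_of_monotone (fun i ↦ monotone_cdf _)
    (fun i x ↦ ⟨cdf_nonneg _ x, cdf_le_one _ x⟩) (continuous_cdf _)
    (tendsto_cdf_atBot _) (tendsto_cdf_atTop _) fun x ↦ ?_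
  have hnull : (P : Measure ℝ) (frontier (Iic x)) = 0 := by
    rw [frontier_Iic, measure_singleton]
  simp only [cdf_eq_real]
  exact (ENNReal.tendsto_toReal (measure_ne_top _ _)).comp
    (ProbabilityMeasure.tendsto_measure_of_null_frontier_of_tendsto' h hnull)

section IntegralBounds

variable {X : Type*} [TopologicalSpace X] [MeasurableSpace X]

lemma isTightMeasureSet_lintegral_le {V : X → ℝ≥0∞} (hV : Measurable V)
    (hV_top : Tendsto V (cocompact X) (𝓝 ∞)) {C : ℝ≥0∞} (hC : C ≠ ∞) :
    IsTightMeasureSet {μ : Measure X | ∫⁻ x, V x ∂μ ≤ C} := by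
  rw [isTightMeasureSet_iff_exists_isCompact_measure_compl_le]
  intro ε hε
  have hdiv : Tendsto (fun n : ℕ ↦ C / n) atTop (𝓝 0) := by
    simpa using ENNReal.Tendsto.const_div ENNReal.tendsto_nat_nhds_top (.inr hC)
  obtain ⟨n, hn, hn0⟩ : ∃ n : ℕ, C / n < ε ∧ 0 < n :=
    ((hdiv.eventually_lt_const hε).and (eventually_gt_atTop 0)).exists
  obtain ⟨K, hK, hKV⟩ := mem_cocompact.1
    (hV_top.eventually_const_le (ENNReal.natCast_lt_top n))
  refine ⟨K, hK, fun μ hμ ↦ ?_⟩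
  calc μ Kᶜ ≤ μ {x | n ≤ V x} := measure_mono hKV
    _ ≤ (∫⁻ x, V x ∂μ) / n :=
      meas_ge_le_lintegral_div hV.aemeasurable (by simpa using hn0.ne') (ENNReal.natCast_ne_top n)
    _ ≤ C / n := ENNReal.div_le_div_right hμ _
    _ ≤ ε := hn.le

section OpensMeasurableSpace

variable [OpensMeasurableSpace X]

lemma continuous_lintegral_min {V : X → ℝ≥0∞} (hV : Continuous V) (M : ℝ≥0) :
    Continuous fun ρ : ProbabilityMeasure X ↦ ∫⁻ x, min (V x) M ∂(ρ : Measure X) := by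
  have hfin (x : X) : min (V x) M ≠ ∞ := ne_top_of_le_ne_top ENNReal.coe_ne_top (min_le_right _ _)
  have hmem (x : X) : ((min (V x) M).toNNReal : ℝ) ∈ Icc 0 (M : ℝ) :=
    ⟨NNReal.coe_nonneg _, ENNReal.toReal_mono ENNReal.coe_ne_top (min_le_right _ _)⟩
  let g : X →ᵇ ℝ≥0 := .mkOfBound
    ⟨fun x ↦ (min (V x) M).toNNReal,
      ENNReal.continuousOn_toNNReal.comp_continuous (by fun_prop) hfin⟩
    (M - 0) fun x y ↦ Real.dist_le_of_mem_Icc (hmem x) (hmem y)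
  simpa [g, ENNReal.coe_toNNReal (hfin _)] using
    ProbabilityMeasure.continuous_lintegral_boundedContinuousFunction g

lemma lowerSemicontinuous_lintegral {V : X → ℝ≥0∞} (hV : Continuous V) :
    LowerSemicontinuous fun ρ : ProbabilityMeasure X ↦ ∫⁻ x, V x ∂(ρ : Measure X) := by
  have hsup (ρ : ProbabilityMeasure X) : ∫⁻ x, V x ∂(ρ : Measure X)
      = ⨆ n : ℕ, ∫⁻ x, min (V x) n ∂(ρ : Measure X) := by
    rw [← lintegral_iSup (by fun_prop) fun m n hmn x ↦ by gcongr]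
    refine lintegral_congr fun x ↦ ?_
    simpa [ENNReal.iSup_natCast] using inf_iSup_eq (V x) fun n : ℕ ↦ (n : ℝ≥0∞)
  simp only [hsup]
  exact lowerSemicontinuous_iSup fun n ↦ (continuous_lintegral_min hV n).lowerSemicontinuous

lemma continuous_integral_min {f : X → ℝ} (hf : Continuous f) (hf0 : 0 ≤ f) {M : ℝ} (hM : 0 ≤ M) :
    Continuous fun ρ : ProbabilityMeasure X ↦ ∫ x, min (f x) M ∂(ρ : Measure X) :=
  ProbabilityMeasure.continuous_integral_boundedContinuousFunction
    (.ofNormedAddCommGroup (fun x ↦ min (f x) M) (by fun_prop) M fun x ↦ by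
      rw [Real.norm_of_nonneg (le_min (hf0 x) hM)]
      exact min_le_right _ _)

end OpensMeasurableSpace

lemma isCompact_lintegral_le [BorelSpace X] [T2Space X] {V : X → ℝ≥0∞} (hV : Continuous V)
    (hV_top : Tendsto V (cocompact X) (𝓝 ∞)) {C : ℝ≥0∞} (hC : C ≠ ∞) :
    IsCompact {ρ : ProbabilityMeasure X | ∫⁻ x, V x ∂(ρ : Measure X) ≤ C} := by
  have hclosed : IsClosed {ρ : ProbabilityMeasure X | ∫⁻ x, V x ∂(ρ : Measure X) ≤ C} :=
    (lowerSemicontinuous_lintegral hV).isClosed_preimage C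
  rw [← hclosed.closure_eq]
  refine isCompact_closure_of_isTightMeasureSet
    ((isTightMeasureSet_lintegral_le hV.measurable hV_top hC).subset ?_)
  rintro _ ⟨ρ, hρ, rfl⟩
  exact hρ

end IntegralBounds

lemma dist_integral_min_integral_le {X : Type*} [MeasurableSpace X] {μ : Measure X}
    [IsFiniteMeasure μ] {f : X → ℝ} (hf : MemLp f 2 μ) {M : ℝ} (hM : 0 < M) :
    dist (∫ x, f x ∂μ) (∫ x, min (f x) M ∂μ) ≤ (∫ x, f x ^ 2 ∂μ) / M := by
  have hfint : Integrable f μ := hf.integrable one_le_two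
  have hmin : Integrable (fun x ↦ min (f x) M) μ := hfint.inf (integrable_const M)
  have hpt (x : X) : f x - min (f x) M ≤ f x ^ 2 / M := by
    rcases le_total (f x) M with h | h
    · rw [min_eq_left h, sub_self]
      positivity
    · rw [min_eq_right h, le_div_iff₀ hM]
      nlinarith [sq_nonneg (f x - M)]
  rw [Real.dist_eq, ← integral_sub hfint hmin, ← integral_div,
    abs_of_nonneg (integral_nonneg fun x ↦ sub_nonneg.2 (min_le_left _ _))]
  exact integral_mono (hfint.sub hmin) (hf.integrable_sq.div_const M) hpt

lemma continuousOn_integral_of_lintegral_sq_le {X : Type*} [TopologicalSpace X] [MeasurableSpace X]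
    [OpensMeasurableSpace X] {f : X → ℝ} (hf : Continuous f) (hf0 : 0 ≤ f) {C : ℝ≥0∞}
    (hC : C ≠ ∞) : ContinuousOn (fun ρ : ProbabilityMeasure X ↦ ∫ x, f x ∂(ρ : Measure X))
      {ρ | ∫⁻ x, ENNReal.ofReal (f x ^ 2) ∂(ρ : Measure X) ≤ C} := by
  have htrunc (n : ℕ) :
      Continuous fun ρ : ProbabilityMeasure X ↦ ∫ x, min (f x) n ∂(ρ : Measure X) :=
    continuous_integral_min hf hf0 n.cast_nonneg
  refine TendstoUniformlyOn.continuousOn (p := atTop) ?_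
    (Frequently.of_forall fun n : ℕ ↦ (htrunc n).continuousOn)
  rw [Metric.tendstoUniformlyOn_iff]
  intro ε hε
  filter_upwards [(tendsto_const_div_atTop_nhds_zero_nat C.toReal).eventually_lt_const hε,
    eventually_gt_atTop 0] with n hn hn0 ρ hρ
  have hsq : Integrable (fun x ↦ f x ^ 2) (ρ : Measure X) :=
    (lintegral_ofReal_ne_top_iff_integrable (by fun_prop)
      (ae_of_all _ fun x ↦ sq_nonneg (f x))).1 (ne_top_of_le_ne_top hC hρ)
  calc dist (∫ x, f x ∂(ρ : Measure X)) (∫ x, min (f x) n ∂(ρ : Measure X))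
      ≤ (∫ x, f x ^ 2 ∂(ρ : Measure X)) / n := dist_integral_min_integral_le
        ((memLp_two_iff_integrable_sq (by fun_prop)).2 hsq) (by exact_mod_cast hn0)
    _ ≤ C.toReal / n := by
      rw [integral_eq_lintegral_of_nonneg_ae (ae_of_all _ fun x ↦ sq_nonneg (f x)) (by fun_prop)]
      gcongr
    _ < ε := hn

lemma ext_of_mgf_eventuallyEq {μ ν : Measure ℝ} [IsFiniteMeasure μ] [IsFiniteMeasure ν]
    (hμ : ∀ᶠ t in 𝓝 0, t ∈ integrableExpSet id μ) (hν : ∀ᶠ t in 𝓝 0, t ∈ integrableExpSet id ν)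
    (h : mgf id μ =ᶠ[𝓝 0] mgf id ν) : μ = ν := by
  let strip : Set ℂ :=
    Complex.re ⁻¹' (interior (integrableExpSet id μ) ∩ interior (integrableExpSet id ν))
  have hstrip : IsPreconnected strip :=
    ((convex_integrableExpSet.interior.inter convex_integrableExpSet.interior).linear_preimage
      Complex.reLm).isPreconnected
  have himag (z : ℂ) (hz : z.re = 0) : z ∈ strip := by
    simpa only [strip, mem_preimage, hz] using
      ⟨mem_interior_iff_mem_nhds.2 hμ, mem_interior_iff_mem_nhds.2 hν⟩
  have hreal : ∃ᶠ x : ℝ in 𝓝[≠] 0, complexMGF id μ x = complexMGF id ν x := by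
    refine (h.filter_mono nhdsWithin_le_nhds).frequently.mono fun x hx ↦ ?_
    rw [complexMGF_ofReal, complexMGF_ofReal, hx]
  have hofReal : Tendsto ((↑) : ℝ → ℂ) (𝓝[≠] 0) (𝓝[≠] 0) :=
    (Complex.continuous_ofReal.tendsto' 0 0 rfl).inf (by simp)
  have hEq : EqOn (complexMGF id μ) (complexMGF id ν) strip :=
    AnalyticOnNhd.eqOn_of_preconnected_of_frequently_eq
      (analyticOnNhd_complexMGF.mono fun z hz ↦ hz.1)
      (analyticOnNhd_complexMGF.mono fun z hz ↦ hz.2)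
      hstrip (himag 0 rfl) (hofReal.frequently hreal)
  refine Measure.ext_of_charFun (funext fun t ↦ ?_)
  rw [← complexMGF_id_mul_I, ← complexMGF_id_mul_I]
  exact hEq (himag _ (by simp))

lemma exp_mul_abs_le (r x : ℝ) :
    Real.exp (r * |x|) ≤ Real.exp (r * x) + Real.exp (-r * x) := by
  calc Real.exp (r * |x|) ≤ Real.exp |r * x| := by
        rw [abs_mul]
        gcongr
        exact le_abs_self r
    _ ≤ Real.exp (r * x) + Real.exp (-(r * x)) := Real.exp_abs_le _
    _ = Real.exp (r * x) + Real.exp (-r * x) := by rw [neg_mul]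

lemma lintegral_exp_mul_abs_le_mgf_add_mgf {Ω : Type*} [MeasurableSpace Ω] {μ : Measure Ω}
    {X : Ω → ℝ} {r : ℝ} (hr : r ∈ integrableExpSet X μ) (hr' : -r ∈ integrableExpSet X μ) :
    ∫⁻ ω, ENNReal.ofReal (Real.exp (r * |X ω|)) ∂μ ≤
      ENNReal.ofReal (mgf X μ r + mgf X μ (-r)) := by
  have hsum : Integrable (fun ω ↦ Real.exp (r * X ω) + Real.exp (-r * X ω)) μ := hr.add hr'
  rw [mgf, mgf, ← integral_add hr hr',
    ofReal_integral_eq_lintegral_ofReal hsum (ae_of_all _ fun ω ↦ by positivity)]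
  gcongr with ω
  exact exp_mul_abs_le r (X ω)

lemma mem_integrableExpSet_of_abs_le {Ω : Type*} [MeasurableSpace Ω] {μ : Measure Ω}
    {X : Ω → ℝ} (hX : AEMeasurable X μ) {r t : ℝ}
    (h : ∫⁻ ω, ENNReal.ofReal (Real.exp (r * |X ω|)) ∂μ ≠ ∞) (ht : |t| ≤ r) :
    t ∈ integrableExpSet X μ := by
  have hint : Integrable (fun ω ↦ Real.exp (r * |X ω|)) μ :=
    (lintegral_ofReal_ne_top_iff_integrable (by fun_prop)
      (ae_of_all _ fun ω ↦ (Real.exp_pos _).le)).1 h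
  refine hint.mono' (by fun_prop) (ae_of_all _ fun ω ↦ ?_)
  rw [Real.norm_of_nonneg (Real.exp_pos _).le, Real.exp_le_exp]
  exact (le_abs_self _).trans (abs_mul t _ ▸ by gcongr)

lemma isCompact_lintegral_exp_mul_abs_le {r : ℝ} (hr : 0 < r) {C : ℝ≥0∞} (hC : C ≠ ∞) :
    IsCompact {ρ : ProbabilityMeasure ℝ |
      ∫⁻ x, ENNReal.ofReal (Real.exp (r * |x|)) ∂(ρ : Measure ℝ) ≤ C} := by
  refine isCompact_lintegral_le (ENNReal.continuous_ofReal.comp (by fun_prop))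
    (ENNReal.tendsto_ofReal_nhds_top.2 ?_) hC
  exact Real.tendsto_exp_atTop.comp ((tendsto_norm_cocompact_atTop (E := ℝ)).const_mul_atTop hr)

lemma continuousOn_mgf_id {r t : ℝ} (ht : |t| ≤ r / 2) {C : ℝ≥0∞} (hC : C ≠ ∞) :
    ContinuousOn (fun ρ : ProbabilityMeasure ℝ ↦ mgf id (ρ : Measure ℝ) t)
      {ρ | ∫⁻ x, ENNReal.ofReal (Real.exp (r * |x|)) ∂(ρ : Measure ℝ) ≤ C} := by
  have hsq (x : ℝ) : Real.exp (t * x) ^ 2 ≤ Real.exp (r * |x|) := by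
    rw [← Real.exp_nat_mul, Real.exp_le_exp]
    calc ((2 : ℕ) : ℝ) * (t * x) = 2 * (t * x) := by norm_num
      _ ≤ 2 * (|t| * |x|) := by rw [← abs_mul]; gcongr; exact le_abs_self _
      _ ≤ 2 * (r / 2 * |x|) := by gcongr
      _ = r * |x| := by ring
  refine (continuousOn_integral_of_lintegral_sq_le (f := fun x ↦ Real.exp (t * x)) (by fun_prop)
    (fun x ↦ (Real.exp_pos _).le) hC).mono fun ρ hρ ↦ ?_
  exact (lintegral_mono fun x ↦ ENNReal.ofReal_le_ofReal (hsq x)).trans hρ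

theorem tendsto_probabilityMeasure_of_tendsto_mgf {ι : Type*} {l : Filter ι}
    {μ : ι → ProbabilityMeasure ℝ} {P : ProbabilityMeasure ℝ}
    (hP : ∀ᶠ t in 𝓝 0, t ∈ integrableExpSet id (P : Measure ℝ))
    (hμ : ∀ᶠ t in 𝓝 0, ∀ᶠ i in l, t ∈ integrableExpSet id (μ i : Measure ℝ))
    (h : ∀ᶠ t in 𝓝 0,
      Tendsto (fun i ↦ mgf id (μ i : Measure ℝ) t) l (𝓝 (mgf id (P : Measure ℝ) t))) :
    Tendsto μ l (𝓝 P) := by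
  obtain ⟨r, hr, hball⟩ := Metric.nhds_basis_closedBall.eventually_iff.1 (hμ.and h)
  obtain ⟨hμ_pos, h_pos⟩ := @hball r (by simp [abs_of_pos hr])
  obtain ⟨hμ_neg, h_neg⟩ := @hball (-r) (by simp [abs_of_pos hr])
  let C : ℝ := mgf id (P : Measure ℝ) r + mgf id (P : Measure ℝ) (-r) + 1
  let K : Set (ProbabilityMeasure ℝ) :=
    {ρ | ∫⁻ x, ENNReal.ofReal (Real.exp (r * |x|)) ∂(ρ : Measure ℝ) ≤ ENNReal.ofReal C}
  have hμK : ∀ᶠ i in l, μ i ∈ K := by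
    filter_upwards [hμ_pos, hμ_neg, (h_pos.add h_neg).eventually_le_const (lt_add_one _)]
      with i hi_pos hi_neg hiC
    exact (lintegral_exp_mul_abs_le_mgf_add_mgf hi_pos hi_neg).trans (ENNReal.ofReal_le_ofReal hiC)
  have hK : IsCompact K := isCompact_lintegral_exp_mul_abs_le hr ENNReal.ofReal_ne_top
  refine hK.tendsto_nhds_of_unique_mapClusterPt hμK fun ν hν hcluster ↦ ?_
  obtain ⟨U, hU, hμν⟩ := mapClusterPt_iff_ultrafilter.1 hcluster
  have hμν' : Tendsto μ U (𝓝[K] ν) := tendsto_nhdsWithin_iff.2 ⟨hμν, hU hμK⟩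
  have hsmall (s : ℝ) (hs : 0 < s) : ∀ᶠ t : ℝ in 𝓝 0, |t| ≤ s :=
    (continuous_abs.tendsto' (0 : ℝ) 0 abs_zero).eventually_le_const hs
  have hν_int : ∀ᶠ t in 𝓝 0, t ∈ integrableExpSet id (ν : Measure ℝ) :=
    (hsmall r hr).mono fun t ht ↦ mem_integrableExpSet_of_abs_le aemeasurable_id
      (ne_top_of_le_ne_top ENNReal.ofReal_ne_top hν) ht
  have hmgf : mgf id (ν : Measure ℝ) =ᶠ[𝓝 0] mgf id (P : Measure ℝ) := by
    filter_upwards [h, hsmall (r / 2) (half_pos hr)] with t hlim ht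
    exact tendsto_nhds_unique
      ((continuousOn_mgf_id ht ENNReal.ofReal_ne_top ν hν).tendsto.comp hμν') (hlim.mono_left hU)
  have hνP : (ν : Measure ℝ) = P := ext_of_mgf_eventuallyEq hν_int hP hmgf
  exact Subtype.ext hνP

section InMeasure

variable {ι Ω : Type*} [MeasurableSpace Ω] {μ : Measure Ω} {l : Filter ι}

/-- The filter of sets whose complements have sections over `ι` of `μ`-measure tending to `0` along
`l`. Convergence of `(i, ω) ↦ f i ω` along it to a point is convergence in measure along `l` to that
constant, so theorems about limits along arbitrary filters apply to convergence in measure. -/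
def inMeasureFilter (μ : Measure Ω) (l : Filter ι) : Filter (ι × Ω) :=
  .comk (fun s ↦ Tendsto (fun i ↦ μ (Prod.mk i ⁻¹' s)) l (𝓝 0))
    (by simpa only [preimage_empty, measure_empty] using tendsto_const_nhds)
    (fun _ ht _ hst ↦ tendsto_of_tendsto_of_tendsto_of_le_of_le tendsto_const_nhds ht
      (fun _ ↦ zero_le) fun _ ↦ measure_mono (preimage_mono hst))
    (fun _ hs _ ht ↦ tendsto_of_tendsto_of_tendsto_of_le_of_le tendsto_const_nhds
      (add_zero (0 : ℝ≥0∞) ▸ hs.add ht) (fun _ ↦ zero_le) fun _ ↦ measure_union_le _ _)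

lemma eventually_inMeasureFilter {p : ι × Ω → Prop} :
    (∀ᶠ x in inMeasureFilter μ l, p x) ↔ Tendsto (fun i ↦ μ {ω | ¬ p (i, ω)}) l (𝓝 0) :=
  Iff.rfl

lemma tendsto_inMeasureFilter_iff {E : Type*} [PseudoEMetricSpace E] {f : ι → Ω → E} {c : E} :
    Tendsto (fun x : ι × Ω ↦ f x.1 x.2) (inMeasureFilter μ l) (𝓝 c) ↔
      TendstoInMeasure μ f l fun _ ↦ c := by
  simp only [EMetric.tendsto_nhds, eventually_inMeasureFilter, not_lt, TendstoInMeasure]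

lemma tendstoInMeasure_iff_measure_lt_dist {E : Type*} [PseudoMetricSpace E] {f : ι → Ω → E}
    {g : Ω → E} : TendstoInMeasure μ f l g ↔
      ∀ ε > 0, Tendsto (fun i ↦ μ {ω | ε < dist (f i ω) (g ω)}) l (𝓝 0) := by
  rw [tendstoInMeasure_iff_dist]
  refine ⟨fun h ε hε ↦ ?_, fun h ε hε ↦ ?_⟩
  · exact tendsto_of_tendsto_of_tendsto_of_le_of_le tendsto_const_nhds (h ε hε)
      (fun _ ↦ zero_le) fun _ ↦ measure_mono (ofPred_subset_ofPred.2 fun _ ↦ le_of_lt)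
  · exact tendsto_of_tendsto_of_tendsto_of_le_of_le tendsto_const_nhds (h (ε / 2) (half_pos hε))
      (fun _ ↦ zero_le) fun _ ↦ measure_mono (ofPred_subset_ofPred.2 fun _ ↦
        (half_lt_self hε).trans_le)

end InMeasure

theorem laplace_conv_implies_uniform_cdf_conv_in_probability_general {ι Ω : Type*}
    [MeasurableSpace Ω] {μ : Measure Ω} {l : Filter ι} {P : Measure ℝ} [IsProbabilityMeasure P]
    [NullSingletonClass P] {Q : ι → Ω → Measure ℝ} [∀ i ω, IsProbabilityMeasure (Q i ω)]
    (hP : ∀ᶠ t in 𝓝 0, t ∈ integrableExpSet id P)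
    (hQ : ∀ᶠ t in 𝓝 0, ∀ i, ∀ᵐ ω ∂μ, t ∈ integrableExpSet id (Q i ω))
    (hconv : ∀ᶠ t in 𝓝 0, TendstoInMeasure μ (fun i ω ↦ mgf id (Q i ω) t) l fun _ ↦ mgf id P t) :
    TendstoInMeasure μ (fun i ω ↦ ⨆ s, dist (cdf (Q i ω) s) (cdf P s)) l fun _ ↦ 0 := by
  let P' : ProbabilityMeasure ℝ := ⟨P, inferInstance⟩
  let Q' (x : ι × Ω) : ProbabilityMeasure ℝ := ⟨Q x.1 x.2, inferInstance⟩
  have : NullSingletonClass (P' : Measure ℝ) := ‹NullSingletonClass P›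
  have hQ' : ∀ᶠ t in 𝓝 0, ∀ᶠ x in inMeasureFilter μ l,
      t ∈ integrableExpSet id (Q' x : Measure ℝ) := by
    filter_upwards [hQ] with t ht
    exact eventually_inMeasureFilter.2 (tendsto_const_nhds.congr fun i ↦ (ae_iff.1 (ht i)).symm)
  have hweak : Tendsto Q' (inMeasureFilter μ l) (𝓝 P') :=
    tendsto_probabilityMeasure_of_tendsto_mgf hP hQ'
      (hconv.mono fun _ ↦ tendsto_inMeasureFilter_iff.2)
  exact tendsto_inMeasureFilter_iff.1
    (tendsto_iSup_dist_of_tendstoUniformly (tendstoUniformly_cdf hweak))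

end

/-- Lemma A.2, second part: under the Laplace-transform convergence hypotheses of
Lemma A.1, if the limit measure `P` is atomless then the cumulative distribution
functions of the random measures `Q n` converge to that of `P` uniformly over ℝ,
in probability. -/
theorem laplace_conv_implies_uniform_cdf_conv_in_probability
    {Ω : Type*} [MeasurableSpace Ω] (ℙ : Measure Ω) [IsProbabilityMeasure ℙ]
    (P : Measure ℝ) [IsProbabilityMeasure P]
    (hPint : ∀ t : ℝ, Integrable (fun x => Real.exp (t * x)) P)
    (L : ℝ → ℝ) (hL : ∀ t, L t = ∫ x, Real.exp (t * x) ∂P)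
    (Q : ℕ → Ω → Measure ℝ) (hQprob : ∀ n ω, IsProbabilityMeasure (Q n ω))
    (hQmeas : ∀ (n : ℕ) (g : ℝ → ℝ), Measurable g → (∃ C, ∀ x, |g x| ≤ C) →
      Measurable (fun ω => ∫ x, g x ∂(Q n ω)))
    (hQint : ∀ (t : ℝ) (n : ℕ) (ω : Ω), Integrable (fun x => Real.exp (t * x)) (Q n ω))
    (hQLmeas : ∀ (t : ℝ) (n : ℕ), Measurable (fun ω => ∫ x, Real.exp (t * x) ∂(Q n ω)))
    (hconv : ∀ t : ℝ, ∀ ε > (0 : ℝ),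
      Tendsto (fun n => ℙ {ω | ε < |(∫ x, Real.exp (t * x) ∂(Q n ω)) - L t|})
        atTop (nhds 0))
    (hnoatoms : ∀ x : ℝ, P {x} = 0) :
    ∀ ε > (0 : ℝ),
      Tendsto
        (fun n => ℙ {ω | ε < ⨆ s : ℝ, |((Q n ω) (Set.Iic s)).toReal - (P (Set.Iic s)).toReal|})
        atTop (nhds 0) := by
  have : NullSingletonClass P := ⟨hnoatoms⟩
  simp only [hL] at hconv
  have hcdf := laplace_conv_implies_uniform_cdf_conv_in_probability_general (.of_forall hPint)
    (.of_forall fun t n ↦ ae_of_all ℙ (hQint t n))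
    (.of_forall fun t ↦ tendstoInMeasure_iff_measure_lt_dist.2 (hconv t))
  simpa [tendstoInMeasure_iff_measure_lt_dist, ProbabilityTheory.cdf_eq_real, Measure.real,
    Real.dist_eq, abs_of_nonneg (Real.iSup_nonneg fun _ ↦ abs_nonneg _)] using hcdf
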